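/- Fix n ≥ 1 and let P = ℝⁿ × ℝⁿ. Let U ⊆ P be an open set such that every (x,v) ∈ U has v ≠ 0 and satisfies (x, λv) ∈ U for all λ > 0. Let ψ : P → ℝⁿ be differentiable on U, and define X(x,v) = (v, ψ(x,v)) and R(x,v) = (0,v). The following are equivalent: (i) there exists φ : P → ℝⁿ, differentiable on U, with φ(x,λv) = λ²·φ(x,v) for all (x,v) ∈ U and λ > 0, and vᵢ·φⱼ(x,v) − vⱼ·φᵢ(x,v) = vᵢ·ψⱼ(x,v) − vⱼ·ψᵢ(x,v) for all (x,v) ∈ U and all i, j; (ii) there exist functions a, b : P → ℝ with [R,X](p) = a(p)•R(p) + b(p)•X(p) for all p ∈ U. (Equivalence (i) ⟺ (ii) of the Vlasov Bivector Theorem, in coordinates: the horizontal bivector Ψ = R∧X admits a Vlasov representation if and only if it is integrable.) -/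

import Mathlib

open VectorField

/-!
Project `ψ` along `v`: let `φ₀(x, v) = ψ(x, v) - (B(v, ψ(x, v)) / B(v, v)) v`, where `B` is a
bilinear form with `B(v, v) ≠ 0`, such as the dot product. The projection depends only on the line
`ℝ v`. Hence projecting any Vlasov representative gives `φ₀` again, so one exists iff `φ₀` is itself
homogeneous of degree two or, by Euler's theorem, iff `D_R φ₀ = 2 φ₀`. The projection is also
constant along rays, hence commutes with `D_R`, and this equation says that `D_R ψ - 2 ψ` is
parallel to `v`. Since `[R, X] = (v, D_R ψ - ψ)`, the coefficient of `X` in a combination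
`a R + b X` must be one, so that parallelism is exactly integrability.
-/

section RadialHomogeneity

/-- The radial (Euler) vector field `R` in the second variable; its flow is
`(x, v) ↦ (x, eᵗ v)`. -/
def radialField {E F : Type*} [Zero E] (p : E × F) : E × F := (0, p.2)

/-- Subsets of `E × F` stable under positive dilations of the second variable. -/
def IsRadialCone {E F : Type*} [SMul ℝ F] (U : Set (E × F)) : Prop :=
  ∀ p ∈ U, ∀ l : ℝ, 0 < l → (p.1, l • p.2) ∈ U

/-- Positive homogeneity of degree `s` in the second variable. The exponent is real; the radially
quadratic fields of the theorem are those of degree `2`. -/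
def IsRadiallyHomogeneousOn {E F G : Type*} [SMul ℝ F] [SMul ℝ G] (s : ℝ) (f : E × F → G)
    (U : Set (E × F)) : Prop :=
  ∀ p ∈ U, ∀ l : ℝ, 0 < l → f (p.1, l • p.2) = l ^ s • f p

variable {E F G : Type*} [NormedAddCommGroup E] [NormedSpace ℝ E]
  [NormedAddCommGroup F] [NormedSpace ℝ F] [NormedAddCommGroup G] [NormedSpace ℝ G]

lemma hasDerivAt_comp_ray {f : E × F → G} {x : E} {v : F} {l : ℝ}
    (hf : DifferentiableAt ℝ f (x, l • v)) :
    HasDerivAt (fun t : ℝ ↦ f (x, t • v)) (fderiv ℝ f (x, l • v) (0, v)) l := by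
  have hray : HasDerivAt (fun t : ℝ ↦ (x, t • v)) ((0 : E), v) l := by
    simpa using (hasDerivAt_const l x).prodMk ((hasDerivAt_id l).smul_const v)
  exact hf.hasFDerivAt.comp_hasDerivAt l hray

lemma hasDerivAt_comp_ray_one {f : E × F → G} {p : E × F} (hf : DifferentiableAt ℝ f p) :
    HasDerivAt (fun t : ℝ ↦ f (p.1, t • p.2)) (fderiv ℝ f p (radialField p)) 1 := by
  simpa [radialField] using
    hasDerivAt_comp_ray (x := p.1) (v := p.2) (l := 1) (by simpa using hf)

lemma eq_rpow_smul_of_smul_deriv_eq {s : ℝ} {g g' : ℝ → G}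
    (hg : ∀ t, 0 < t → HasDerivAt g (g' t) t) (heuler : ∀ t, 0 < t → t • g' t = s • g t)
    {t : ℝ} (ht : 0 < t) : g t = t ^ s • g 1 := by
  have hquot : ∀ r ∈ Set.Ioi (0 : ℝ), HasDerivAt (fun r ↦ r ^ (-s) • g r) 0 r := by
    intro r (hr : 0 < r)
    have hpow : r ^ (-s) = r ^ (-s - 1) * r := by
      rw [← Real.rpow_add_one hr.ne', sub_add_cancel]
    refine ((Real.hasDerivAt_rpow_const (Or.inl hr.ne')).smul (hg r hr)).congr_deriv ?_
    rw [hpow, mul_smul, heuler r hr]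
    module
  have hconst : t ^ (-s) • g t = (1 : ℝ) ^ (-s) • g 1 :=
    isOpen_Ioi.is_const_of_deriv_eq_zero isPreconnected_Ioi
      (fun r hr ↦ (hquot r hr).differentiableAt.differentiableWithinAt)
      (fun r hr ↦ (hquot r hr).deriv) ht (Set.mem_Ioi.2 one_pos)
  rw [Real.one_rpow, one_smul] at hconst
  rw [← hconst, smul_smul, ← Real.rpow_add ht, add_neg_cancel, Real.rpow_zero, one_smul]

variable {U : Set (E × F)} {f : E × F → G} {s : ℝ}

lemma IsRadiallyHomogeneousOn.fderiv_radialField (hs : IsRadiallyHomogeneousOn s f U) {p : E × F}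
    (hp : p ∈ U) (hf : DifferentiableAt ℝ f p) :
    fderiv ℝ f p (radialField p) = s • f p := by
  have hpow : HasDerivAt (fun t : ℝ ↦ t ^ s • f p) (s • f p) 1 := by
    simpa using (Real.hasDerivAt_rpow_const (x := 1) (p := s) (by simp)).smul_const (f p)
  refine (hasDerivAt_comp_ray_one hf).unique (hpow.congr_of_eventuallyEq ?_)
  filter_upwards [lt_mem_nhds one_pos] with t ht using hs p hp t ht

theorem isRadiallyHomogeneousOn_iff_fderiv_radialField (hU : IsOpen U) (hcone : IsRadialCone U)
    (hf : DifferentiableOn ℝ f U) :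
    IsRadiallyHomogeneousOn s f U ↔ ∀ p ∈ U, fderiv ℝ f p (radialField p) = s • f p := by
  have hdiff : ∀ p ∈ U, DifferentiableAt ℝ f p := fun p hp ↦ hf.differentiableAt (hU.mem_nhds hp)
  refine ⟨fun hs p hp ↦ hs.fderiv_radialField hp (hdiff p hp), fun heuler p hp l hl ↦ ?_⟩
  have hray := eq_rpow_smul_of_smul_deriv_eq (s := s)
    (fun t ht ↦ hasDerivAt_comp_ray (hdiff _ (hcone p hp t ht)))
    (fun t ht ↦ by
      rw [← map_smul, Prod.smul_mk, smul_zero]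
      exact heuler _ (hcone p hp t ht)) hl
  simpa only [one_smul] using hray

end RadialHomogeneity

section ObliqueProjection

variable {𝕜 E : Type*} [NontriviallyNormedField 𝕜] [NormedAddCommGroup E] [NormedSpace 𝕜 E]
  (B : E →L[𝕜] E →L[𝕜] 𝕜)

/-- The projection `w ↦ w - (B v w / B v v) • v` of `E` onto the kernel of `B v` along `v`.
If `B v v = 0`, division by zero makes it the identity. -/
noncomputable def obliqueProj (v : E) : E →L[𝕜] E :=
  ContinuousLinearMap.id 𝕜 E - ((B v v)⁻¹ • B v).smulRight v

lemma obliqueProj_apply (v w : E) : obliqueProj B v w = w - (B v w / B v v) • v := by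
  simp [obliqueProj, div_eq_inv_mul]

lemma obliqueProj_sub_mem_span (v w : E) : obliqueProj B v w - w ∈ Submodule.span 𝕜 {v} := by
  rw [obliqueProj_apply, sub_sub_cancel_left]
  exact neg_mem (Submodule.smul_mem _ _ (Submodule.mem_span_singleton_self v))

lemma obliqueProj_smul {c : 𝕜} (hc : c ≠ 0) (v : E) : obliqueProj B (c • v) = obliqueProj B v := by
  ext w
  simp only [obliqueProj_apply, map_smul, smul_apply, smul_eq_mul, smul_smul]
  congr 2
  field_simp

variable {B}

lemma obliqueProj_eq_zero_iff {v w : E} (hv : B v v ≠ 0) :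
    obliqueProj B v w = 0 ↔ w ∈ Submodule.span 𝕜 {v} := by
  refine ⟨fun h ↦ by simpa [h] using obliqueProj_sub_mem_span B v w, fun h ↦ ?_⟩
  obtain ⟨c, rfl⟩ := Submodule.mem_span_singleton.1 h
  simp [obliqueProj_apply, hv]

lemma obliqueProj_eq_iff_sub_mem_span {v w w' : E} (hv : B v v ≠ 0) :
    obliqueProj B v w = obliqueProj B v w' ↔ w - w' ∈ Submodule.span 𝕜 {v} := by
  rw [← obliqueProj_eq_zero_iff hv, map_sub, sub_eq_zero]

lemma differentiableOn_obliqueProj {H : Type*} [NormedAddCommGroup H] [NormedSpace 𝕜 H]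
    {U : Set H} {v w : H → E} (hv : DifferentiableOn 𝕜 v U) (hw : DifferentiableOn 𝕜 w U)
    (hB : ∀ p ∈ U, B (v p) (v p) ≠ 0) :
    DifferentiableOn 𝕜 (fun p ↦ obliqueProj B (v p) (w p)) U := by
  simp only [obliqueProj_apply, div_eq_mul_inv]
  have hBv : DifferentiableOn 𝕜 (fun p ↦ B (v p)) U := B.differentiable.comp_differentiableOn hv
  exact hw.sub (((hBv.clm_apply hw).mul ((hBv.clm_apply hv).inv hB)).smul hv)

end ObliqueProjection

section ProjectedField

variable {M E : Type*} [NormedAddCommGroup E] [NormedSpace ℝ E]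
  {B : E →L[ℝ] E →L[ℝ] ℝ} {U : Set (M × E)} {ψ : M × E → E} {s : ℝ}

lemma isRadiallyHomogeneousOn_obliqueProj {φ : M × E → E}
    (hφ : IsRadiallyHomogeneousOn s φ U) :
    IsRadiallyHomogeneousOn s (fun p ↦ obliqueProj B p.2 (φ p)) U := by
  intro p hp l hl
  simp only [obliqueProj_smul B hl.ne', hφ p hp l hl, map_smul]

variable [NormedAddCommGroup M] [NormedSpace ℝ M]

lemma fderiv_obliqueProj_radialField {p : M × E} (hψ : DifferentiableAt ℝ ψ p)
    (hproj : DifferentiableAt ℝ (fun q ↦ obliqueProj B q.2 (ψ q)) p) :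
    fderiv ℝ (fun q ↦ obliqueProj B q.2 (ψ q)) p (radialField p) =
      obliqueProj B p.2 (fderiv ℝ ψ p (radialField p)) := by
  refine (hasDerivAt_comp_ray_one hproj).unique <|
    ((obliqueProj B p.2).hasFDerivAt.comp_hasDerivAt 1
      (hasDerivAt_comp_ray_one hψ)).congr_of_eventuallyEq ?_
  filter_upwards [lt_mem_nhds one_pos] with t ht
  simp only [obliqueProj_smul B ht.ne', Function.comp_apply]

lemma isRadiallyHomogeneousOn_obliqueProj_iff (hU : IsOpen U) (hcone : IsRadialCone U)
    (hB : ∀ p ∈ U, B p.2 p.2 ≠ 0) (hψ : DifferentiableOn ℝ ψ U) :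
    IsRadiallyHomogeneousOn s (fun p ↦ obliqueProj B p.2 (ψ p)) U ↔
      ∀ p ∈ U, fderiv ℝ ψ p (radialField p) - s • ψ p ∈ Submodule.span ℝ {p.2} := by
  have hproj := differentiableOn_obliqueProj differentiableOn_snd hψ hB
  rw [isRadiallyHomogeneousOn_iff_fderiv_radialField hU hcone hproj]
  refine forall₂_congr fun p hp ↦ ?_
  have hp_nhds := hU.mem_nhds hp
  rw [fderiv_obliqueProj_radialField (hψ.differentiableAt hp_nhds)
    (hproj.differentiableAt hp_nhds), ← map_smul, obliqueProj_eq_iff_sub_mem_span (hB p hp)]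

lemma exists_isRadiallyHomogeneousOn_iff_obliqueProj (hcone : IsRadialCone U)
    (hB : ∀ p ∈ U, B p.2 p.2 ≠ 0) (hψ : DifferentiableOn ℝ ψ U) :
    (∃ φ : M × E → E, DifferentiableOn ℝ φ U ∧ IsRadiallyHomogeneousOn s φ U ∧
        ∀ p ∈ U, φ p - ψ p ∈ Submodule.span ℝ {p.2}) ↔
      IsRadiallyHomogeneousOn s (fun p ↦ obliqueProj B p.2 (ψ p)) U := by
  constructor
  · rintro ⟨φ, -, hφ, hspan⟩ p hp l hl
    have hproj : ∀ q ∈ U, obliqueProj B q.2 (φ q) = obliqueProj B q.2 (ψ q) :=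
      fun q hq ↦ (obliqueProj_eq_iff_sub_mem_span (hB q hq)).2 (hspan q hq)
    have hhom := isRadiallyHomogeneousOn_obliqueProj (B := B) hφ p hp l hl
    simpa only [hproj _ hp, hproj _ (hcone p hp l hl)] using hhom
  · exact fun hhom ↦ ⟨_, differentiableOn_obliqueProj differentiableOn_snd hψ hB, hhom,
      fun p _ ↦ obliqueProj_sub_mem_span B p.2 (ψ p)⟩

end ProjectedField

section HorizontalBivector

/-- The horizontal vector field on the phase space `E × E` with vertical part `ψ`. -/
def horizontalField {E : Type*} (ψ : E × E → E) (p : E × E) : E × E := (p.2, ψ p)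

variable {E : Type*} [NormedAddCommGroup E] [NormedSpace ℝ E]
  {B : E →L[ℝ] E →L[ℝ] ℝ} {U : Set (E × E)} {ψ : E × E → E}

lemma lieBracket_radialField_horizontalField {p : E × E} (hψ : DifferentiableAt ℝ ψ p) :
    lieBracket ℝ radialField (horizontalField ψ) p =
      (p.2, fderiv ℝ ψ p (radialField p) - ψ p) := by
  have hX : HasFDerivAt (horizontalField ψ)
      ((ContinuousLinearMap.snd ℝ E E).prod (fderiv ℝ ψ p)) p :=
    hasFDerivAt_snd.prodMk hψ.hasFDerivAt
  have hR : HasFDerivAt (radialField : E × E → E × E)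
      ((0 : E × E →L[ℝ] E).prod (ContinuousLinearMap.snd ℝ E E)) p :=
    (hasFDerivAt_const (0 : E) p).prodMk hasFDerivAt_snd
  rw [lieBracket, hX.fderiv, hR.fderiv]
  simp [radialField, horizontalField]

lemma lieBracket_mem_span_pair_iff {p : E × E} (hψ : DifferentiableAt ℝ ψ p) (hp : p.2 ≠ 0) :
    lieBracket ℝ radialField (horizontalField ψ) p ∈
        Submodule.span ℝ {radialField p, horizontalField ψ p} ↔
      fderiv ℝ ψ p (radialField p) - (2 : ℝ) • ψ p ∈ Submodule.span ℝ {p.2} := by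
  rw [lieBracket_radialField_horizontalField hψ, Submodule.mem_span_pair,
    Submodule.mem_span_singleton]
  simp only [radialField, horizontalField, Prod.smul_mk, Prod.mk_add_mk, Prod.mk.injEq, smul_zero,
    zero_add]
  refine exists_congr fun a ↦ ⟨fun ⟨b, hbv, hbψ⟩ ↦ ?_, fun ha ↦ ⟨1, one_smul ℝ _, ?_⟩⟩
  · obtain rfl : b = 1 := smul_left_injective ℝ hp (by simpa only [one_smul] using hbv)
    rw [eq_sub_iff_add_eq] at hbψ
    rw [← hbψ]
    module
  · rw [ha]
    module

theorem stmt_13_general (hU : IsOpen U) (hcone : IsRadialCone U)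
    (hB : ∀ p ∈ U, B p.2 p.2 ≠ 0) (hψ : DifferentiableOn ℝ ψ U) :
    (∃ φ : E × E → E, DifferentiableOn ℝ φ U ∧ IsRadiallyHomogeneousOn 2 φ U ∧
        ∀ p ∈ U, φ p - ψ p ∈ Submodule.span ℝ {p.2}) ↔
      ∃ a b : E × E → ℝ, ∀ p ∈ U,
        lieBracket ℝ radialField (horizontalField ψ) p =
          a p • radialField p + b p • horizontalField ψ p := by
  have hU0 : ∀ p ∈ U, p.2 ≠ 0 := fun p hp hv ↦ hB p hp (by simp [hv])
  have hbracket : ∀ p ∈ U, lieBracket ℝ radialField (horizontalField ψ) p ∈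
        Submodule.span ℝ {radialField p, horizontalField ψ p} ↔
      fderiv ℝ ψ p (radialField p) - (2 : ℝ) • ψ p ∈ Submodule.span ℝ {p.2} := fun p hp ↦
    lieBracket_mem_span_pair_iff (hψ.differentiableAt (hU.mem_nhds hp)) (hU0 p hp)
  rw [exists_isRadiallyHomogeneousOn_iff_obliqueProj hcone hB hψ,
    isRadiallyHomogeneousOn_obliqueProj_iff hU hcone hB hψ, ← forall₂_congr hbracket]
  simp only [Submodule.mem_span_pair]
  constructor
  · intro h
    choose! a b hab using h
    exact ⟨a, b, fun p hp ↦ (hab p hp).symm⟩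
  · exact fun ⟨a, b, hab⟩ p hp ↦ ⟨a p, b p, (hab p hp).symm⟩

end HorizontalBivector

section Coordinates

lemma wedge_eq_wedge_iff_sub_mem_span {ι K : Type*} [Field K] {v u w : ι → K} (hv : v ≠ 0) :
    (∀ i j, v i * u j - v j * u i = v i * w j - v j * w i) ↔
      u - w ∈ Submodule.span K {v} := by
  rw [Submodule.mem_span_singleton]
  constructor
  · intro hwedge
    obtain ⟨i, hi : v i ≠ 0⟩ := Function.ne_iff.1 hv
    refine ⟨(u i - w i) / v i, funext fun j ↦ ?_⟩
    rw [Pi.smul_apply, smul_eq_mul, div_mul_eq_mul_div, div_eq_iff hi, Pi.sub_apply]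
    linear_combination -hwedge i j
  · rintro ⟨c, hc⟩ i j
    have hcoord : ∀ k, c * v k = u k - w k := congrFun hc
    linear_combination v j * hcoord i - v i * hcoord j

lemma pow_homogeneous_and_wedge_eq_wedge_iff {ι M : Type*} {U : Set (M × (ι → ℝ))}
    {φ ψ : M × (ι → ℝ) → ι → ℝ} {k : ℕ} (hU0 : ∀ p ∈ U, p.2 ≠ 0) :
    ((∀ p ∈ U, ∀ l : ℝ, 0 < l → φ (p.1, l • p.2) = l ^ k • φ p) ∧
        ∀ p ∈ U, ∀ i j, p.2 i * φ p j - p.2 j * φ p i = p.2 i * ψ p j - p.2 j * ψ p i) ↔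
      IsRadiallyHomogeneousOn k φ U ∧ ∀ p ∈ U, φ p - ψ p ∈ Submodule.span ℝ {p.2} := by
  simp only [IsRadiallyHomogeneousOn, Real.rpow_natCast]
  exact and_congr_right fun _ ↦
    forall₂_congr fun p hp ↦ wedge_eq_wedge_iff_sub_mem_span (hU0 p hp)

end Coordinates

/-- Vlasov Bivector Theorem, (i) ⟺ (ii) in coordinates: the horizontal bivector `R∧X`
admits a Vlasov representation iff it is integrable
(`[R,X]` is pointwise a combination `a•R + b•X` on `U`). -/
theorem stmt_13 (n : ℕ) (hn : 1 ≤ n)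
    (U : Set ((Fin n → ℝ) × (Fin n → ℝ))) (hU : IsOpen U)
    (hU0 : ∀ p ∈ U, p.2 ≠ 0)
    (hUcone : ∀ p ∈ U, ∀ l : ℝ, 0 < l → (p.1, l • p.2) ∈ U)
    (ψ : (Fin n → ℝ) × (Fin n → ℝ) → (Fin n → ℝ))
    (hψ : DifferentiableOn ℝ ψ U)
    (X R : (Fin n → ℝ) × (Fin n → ℝ) → (Fin n → ℝ) × (Fin n → ℝ))
    (hX : X = fun p => (p.2, ψ p))
    (hR : R = fun p => (0, p.2)) :
    (∃ φ : (Fin n → ℝ) × (Fin n → ℝ) → (Fin n → ℝ),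
        DifferentiableOn ℝ φ U ∧
        (∀ p ∈ U, ∀ l : ℝ, 0 < l → φ (p.1, l • p.2) = l ^ 2 • φ p) ∧
        (∀ p ∈ U, ∀ i j : Fin n,
          p.2 i * φ p j - p.2 j * φ p i = p.2 i * ψ p j - p.2 j * ψ p i)) ↔
    (∃ a b : (Fin n → ℝ) × (Fin n → ℝ) → ℝ,
        ∀ p ∈ U, lieBracket ℝ R X p = a p • R p + b p • X p) := by
  subst hX hR
  have hdot : ∀ p ∈ U, (dotProductBilin ℝ ℝ).toContinuousBilinearMap p.2 p.2 ≠ 0 :=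
    fun p hp ↦ dotProduct_self_eq_zero.not.2 (hU0 p hp)
  exact (exists_congr fun _ ↦ and_congr_right' (pow_homogeneous_and_wedge_eq_wedge_iff hU0)).trans
    (stmt_13_general hU hUcone hdot hψ)
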